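/- Assume m < 0, let k ≥ 1 be an integer, and let j ≥ 0 be an integer. On the open set U := {z ∈ ℍ : Q_X(z) ≠ 0} define w(z) := 2|m|/p_z(X)² and f_j(z) := ( y^{−2} · conj(Q_X(z)) )^j · w(z)^{(k+j)/2} · ₂F₁( (k+j)/2, (k+j+1)/2; k + 1/2; w(z) ). Then on U one has R_{2j} f_j (z) = ( sgn(p_z(X)) / √(4N|m|) ) · (k+j) · f_{j+1}(z). -/

import Mathlib

open Complex ComplexConjugate Metric Set MeasureTheory

noncomputable section

/-- The upper half-plane, as a subset of `ℂ`. -/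
def UH : Set ℂ := {z | 0 < z.im}

/-- The Wirtinger derivative `∂f/∂z = (1/2)(∂f/∂x − i·∂f/∂y)`. -/
def dz (f : ℂ → ℂ) (z : ℂ) : ℂ :=
  (1 / 2 : ℂ) * (fderiv ℝ f z 1 - Complex.I * fderiv ℝ f z Complex.I)

/-- The Maass raising operator `R_κ f = 2i·∂f/∂z + (κ/y)·f`. -/
def raise (κ : ℝ) (f : ℂ → ℂ) : ℂ → ℂ :=
  fun z => 2 * Complex.I * dz f z + ((κ / z.im : ℝ) : ℂ) * f z

/-- The iterated raising operator `R_κⁿ = R_{κ+2n−2} ∘ ⋯ ∘ R_{κ+2} ∘ R_κ`. -/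
def raiseIter (κ : ℝ) : ℕ → (ℂ → ℂ) → (ℂ → ℂ)
  | 0 => fun f => f
  | n + 1 => fun f => raise (κ + 2 * n) (raiseIter κ n f)

/-- `m = (b² − 4Nac)/(4N)`, the value `q(X)` of the quadratic form at
`X = ((b/2N, c/N), (−a, −b/2N))`. -/
def mVal (N : ℕ) (a b c : ℝ) : ℝ := (b ^ 2 - 4 * N * a * c) / (4 * N)

/-- The quadratic polynomial `Q_X(z) = aNz² + bz + c`. -/
def Qx (N : ℕ) (a b c : ℝ) (z : ℂ) : ℂ := (a : ℂ) * (N : ℂ) * z ^ 2 + (b : ℂ) * z + (c : ℂ)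

/-- The quantity `p_z(X) = (aN|z|² + bx + c)/(√(2N)·y)`. -/
def pX (N : ℕ) (a b c : ℝ) (z : ℂ) : ℝ :=
  (a * N * Complex.normSq z + b * z.re + c) / (Real.sqrt (2 * N) * z.im)

/-- The argument `w(z) = 2|m|/p_z(X)²` of the hypergeometric series. -/
def wF (N : ℕ) (a b c : ℝ) (z : ℂ) : ℝ := 2 * |mVal N a b c| / (pX N a b c z) ^ 2

/-- The Gauss hypergeometric series `₂F₁(α, β; γ; w) = ∑ (α)ₙ(β)ₙ/((γ)ₙ n!) wⁿ`,
with `(α)ₙ` the ascending Pochhammer symbol. -/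
def gaussF (α β γ w : ℝ) : ℝ :=
  ∑' n : ℕ, (Polynomial.eval α (ascPochhammer ℝ n) * Polynomial.eval β (ascPochhammer ℝ n) /
    (Polynomial.eval γ (ascPochhammer ℝ n) * (n.factorial : ℝ))) * w ^ n

/-- The function `f_j(z) = (y^(−2)·conj(Q_X(z)))^j · w^((k+j)/2) ·
₂F₁((k+j)/2, (k+j+1)/2; k+1/2; w)`. -/
def fj (N : ℕ) (a b c : ℝ) (k j : ℕ) (z : ℂ) : ℂ :=
  (((z.im : ℂ) ^ (2 : ℕ))⁻¹ * conj (Qx N a b c z)) ^ j *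
    ((wF N a b c z ^ (((k : ℝ) + j) / 2) : ℝ) : ℂ) *
    ((gaussF (((k : ℝ) + j) / 2) (((k : ℝ) + j + 1) / 2) ((k : ℝ) + 1 / 2)
      (wF N a b c z) : ℝ) : ℂ)

/-- Coefficients of the hypergeometric series. -/
def hgc (α β γ : ℝ) (n : ℕ) : ℝ :=
  Polynomial.eval α (ascPochhammer ℝ n) * Polynomial.eval β (ascPochhammer ℝ n) /
    (Polynomial.eval γ (ascPochhammer ℝ n) * (n.factorial : ℝ))

lemma hgc_pos {α β γ : ℝ} (ha : 0 < α) (hb : 0 < β) (hc : 0 < γ) (n : ℕ) : 0 < hgc α β γ n := by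
  have h1 := ascPochhammer_pos n α ha
  have h2 := ascPochhammer_pos n β hb
  have h3 := ascPochhammer_pos n γ hc
  unfold hgc
  positivity

lemma hgc_succ {α β γ : ℝ} (hc : 0 < γ) (n : ℕ) :
    hgc α β γ (n + 1) = hgc α β γ n * ((α + n) * (β + n) / ((γ + n) * (n + 1))) := by
  have h3 := ascPochhammer_pos n γ hc
  unfold hgc
  simp only [ascPochhammer_succ_eval, Nat.factorial_succ]
  push_cast
  field_simp

lemma hgc_shift {α β γ : ℝ} (n : ℕ) :
    (α + n) * hgc α β γ n = α * hgc (α + 1) β γ n := by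
  have h : (α + n) * Polynomial.eval α (ascPochhammer ℝ n)
      = α * Polynomial.eval (α + 1) (ascPochhammer ℝ n) := by
    have h1 := ascPochhammer_succ_eval n α
    have h2 : Polynomial.eval α (ascPochhammer ℝ (n + 1))
      = α * Polynomial.eval (α + 1) (ascPochhammer ℝ n) := by
      rw [ascPochhammer_succ_left]; simp
    rw [← h2, h1]; ring
  unfold hgc
  rw [← mul_div_assoc, ← mul_assoc, h]
  ring

lemma hgc_summable {α β γ : ℝ} (ha : 0 < α) (hb : 0 < β) (hc : 0 < γ) {r : ℝ} (h0 : 0 < r)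
    (h1 : r < 1) : Summable (fun n => hgc α β γ n * r ^ n) := by
  refine summable_of_ratio_test_tendsto_lt_one h1
    (Filter.Eventually.of_forall fun n => (mul_pos (hgc_pos ha hb hc n) (pow_pos h0 n)).ne') ?_
  have key : ∀ δ ε : ℝ, Filter.Tendsto (fun n : ℕ => (δ + n) / (ε + n)) Filter.atTop (nhds 1) := by
    intro δ ε
    have := tendsto_add_mul_div_add_mul_atTop_nhds (𝕜 := ℝ) δ ε 1 (d := 1) one_ne_zero
    simpa using this
  have := ((key α γ).mul (key β 1)).mul_const r
  simp only [one_mul] at this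
  refine this.congr fun n => ?_
  have hp := hgc_pos ha hb hc n
  have hp' := hgc_pos ha hb hc (n + 1)
  rw [Real.norm_of_nonneg (by positivity), Real.norm_of_nonneg (by positivity), hgc_succ hc]
  rw [pow_succ]
  field_simp
  ring

lemma gaussF_eq (α β γ w : ℝ) : gaussF α β γ w = ∑' n : ℕ, hgc α β γ n * w ^ n := rfl

lemma gaussF_symm (α β γ w : ℝ) : gaussF α β γ w = gaussF β α γ w := by
  simp only [gaussF]
  congr 1; ext n; ring

lemma gaussF_hasDerivAt {α β γ : ℝ} (ha : 0 < α) (hb : 0 < β) (hc : 0 < γ) {w : ℝ} (h0 : 0 < w)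
    (h1 : w < 1) : ∃ d, HasDerivAt (gaussF α β γ) d w ∧
      w * d + α * gaussF α β γ w = α * gaussF (α + 1) β γ w := by
  obtain ⟨r, hwr, hr1⟩ := exists_between h1
  have hr0 : 0 < r := h0.trans hwr
  have sn : ∀ x : ℝ, 0 < x → x < 1 → Summable (fun n : ℕ => n * hgc α β γ n * x ^ n) := by
    intro x hx0 hx1
    have e := ((hgc_summable (α := α + 1) (by positivity) hb hc hx0 hx1).mul_left α).sub
      ((hgc_summable ha hb hc hx0 hx1).mul_left α)
    refine e.congr fun n => ?_
    rw [← mul_assoc, ← hgc_shift]; ring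
  have hd : HasDerivAt (fun y => ∑' n : ℕ, hgc α β γ n * y ^ n)
      (∑' n : ℕ, hgc α β γ n * (n * w ^ (n - 1))) w := by
    refine hasDerivAt_tsum_of_isPreconnected (t := Set.Ioo (-r) r)
      (u := fun n : ℕ => r⁻¹ * (n * hgc α β γ n * r ^ n))
      (g := fun n y => hgc α β γ n * y ^ n) (g' := fun n y => hgc α β γ n * (n * y ^ (n - 1)))
      (y₀ := w) ((sn r hr0 hr1).mul_left _) isOpen_Ioo isPreconnected_Ioo ?_ ?_ ?_ ?_ ?_
    · intro n y _
      exact (hasDerivAt_pow n y).const_mul _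
    · intro n y hy
      have hp := hgc_pos ha hb hc n
      have hy' : |y| ≤ r := (abs_lt.mpr hy).le
      rw [norm_mul, norm_mul, norm_pow, Real.norm_of_nonneg hp.le, Real.norm_natCast,
        Real.norm_eq_abs]
      rcases n with _ | n
      · simp
      · have : |y| ^ n ≤ r ^ n := by gcongr
        have e : r⁻¹ * (((n + 1 : ℕ) : ℝ) * hgc α β γ (n + 1) * r ^ (n + 1))
            = hgc α β γ (n + 1) * (((n + 1 : ℕ) : ℝ) * r ^ n) := by
          rw [pow_succ]; field_simp
        rw [e]
        simp only [Nat.add_sub_cancel]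
        gcongr
    · exact ⟨by linarith, hwr⟩
    · exact hgc_summable ha hb hc h0 h1
    · exact ⟨by linarith, hwr⟩
  refine ⟨_, hd, ?_⟩
  rw [gaussF_eq, gaussF_eq, ← tsum_mul_left, ← tsum_mul_left, ← tsum_mul_left]
  have e1 : ∀ n : ℕ, w * (hgc α β γ n * (n * w ^ (n - 1))) = n * hgc α β γ n * w ^ n := by
    intro n
    rcases n with _ | n
    · simp
    · simp only [Nat.add_sub_cancel]; rw [pow_succ]; ring
  simp_rw [e1]
  rw [← (sn w h0 h1).tsum_add ((hgc_summable ha hb hc h0 h1).mul_left α)]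
  congr 1; ext n
  rw [← mul_assoc, ← mul_assoc, ← hgc_shift]; ring

/-- `f` is real differentiable at `z` with Wirtinger derivative `d`. -/
def WD (f : ℂ → ℂ) (z d : ℂ) : Prop :=
  ∃ L : ℂ →L[ℝ] ℂ, HasFDerivAt f L z ∧ (1 / 2 : ℂ) * (L 1 - Complex.I * L Complex.I) = d

lemma WD.dz {f : ℂ → ℂ} {z d : ℂ} (h : WD f z d) : dz f z = d := by
  obtain ⟨L, hL, rfl⟩ := h
  simp only [_root_.dz, hL.fderiv]

lemma WD.add {f g : ℂ → ℂ} {z d e : ℂ} (hf : WD f z d) (hg : WD g z e) :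
    WD (fun z => f z + g z) z (d + e) := by
  obtain ⟨L, hL, rfl⟩ := hf
  obtain ⟨M, hM, rfl⟩ := hg
  refine ⟨_, hL.add hM, ?_⟩
  simp; ring

lemma WD.mul {f g : ℂ → ℂ} {z d e : ℂ} (hf : WD f z d) (hg : WD g z e) :
    WD (fun z => f z * g z) z (d * g z + f z * e) := by
  obtain ⟨L, hL, rfl⟩ := hf
  obtain ⟨M, hM, rfl⟩ := hg
  refine ⟨_, hL.mul hM, ?_⟩
  simp; ring

lemma WD.const (c z : ℂ) : WD (fun _ => c) z 0 :=
  ⟨0, hasFDerivAt_const c z, by simp⟩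

lemma WD.id (z : ℂ) : WD (fun z => z) z 1 :=
  ⟨_, hasFDerivAt_id z, by simp; norm_num⟩

lemma WD.conj (z : ℂ) : WD (fun z => conj z) z 0 :=
  ⟨_, (Complex.conjCLE : ℂ ≃L[ℝ] ℂ).toContinuousLinearMap.hasFDerivAt, by simp⟩

lemma WD.pow {f : ℂ → ℂ} {z d : ℂ} (hf : WD f z d) (n : ℕ) :
    WD (fun z => f z ^ n) z (n * f z ^ (n - 1) * d) := by
  obtain ⟨L, hL, rfl⟩ := hf
  refine ⟨_, hL.pow n, ?_⟩
  simp; ring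

lemma WD.comp {u : ℂ → ℝ} {z d : ℂ} {h : ℝ → ℝ} {h' : ℝ} (hu : WD (fun z => (u z : ℂ)) z d)
    (hh : HasDerivAt h h' (u z)) : WD (fun z => (h (u z) : ℂ)) z (h' * d) := by
  obtain ⟨L, hL, rfl⟩ := hu
  have h1 : HasFDerivAt u (Complex.reCLM.comp L) z := by
    have := Complex.reCLM.hasFDerivAt.comp z hL
    simpa [Function.comp_def] using this
  have h2 := hh.comp_hasFDerivAt z h1
  have h3 : HasFDerivAt (fun z => (h (u z) : ℂ))
    (Complex.ofRealCLM.comp (h' • (Complex.reCLM.comp L))) z :=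
    Complex.ofRealCLM.hasFDerivAt.comp z h2
  have h4 : L = Complex.ofRealCLM.comp (Complex.reCLM.comp L) :=
    hL.unique (Complex.ofRealCLM.hasFDerivAt.comp z h1)
  refine ⟨_, h3, ?_⟩
  have e1 := DFunLike.congr_fun h4 1
  have e2 := DFunLike.congr_fun h4 Complex.I
  simp only [ContinuousLinearMap.comp_apply, Complex.ofRealCLM_apply, Complex.reCLM_apply] at e1 e2
  rw [e1, e2]
  simp; ring

lemma WD.im (z : ℂ) : WD (fun z => (z.im : ℂ)) z (-Complex.I / 2) := by
  refine ⟨_, (Complex.ofRealCLM.comp Complex.imCLM).hasFDerivAt, ?_⟩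
  simp; ring

lemma WD.re (z : ℂ) : WD (fun z => (z.re : ℂ)) z (1 / 2) := by
  refine ⟨_, (Complex.ofRealCLM.comp Complex.reCLM).hasFDerivAt, ?_⟩
  simp

/-- The function `y⁻² conj Q`. -/
def GQ (N : ℕ) (a b c : ℝ) (z : ℂ) : ℂ := ((z.im : ℂ) ^ (2 : ℕ))⁻¹ * conj (Qx N a b c z)

lemma WD.GQ (N : ℕ) (a b c : ℝ) (z : ℂ) (hz : 0 < z.im) :
    WD (GQ N a b c) z (Complex.I / z.im * GQ N a b c z) := by
  have h1 := (WD.im z).comp (h := fun t : ℝ => (t ^ 2)⁻¹)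
    ((hasDerivAt_pow 2 z.im).inv (by positivity))
  have h2 := (((WD.const ((a : ℂ) * N) z).mul ((WD.conj z).pow 2)).add
    ((WD.const (b : ℂ) z).mul (WD.conj z))).add (WD.const (c : ℂ) z)
  have h3 := h1.mul h2
  have hy : (z.im : ℂ) ≠ 0 := by exact_mod_cast hz.ne'
  convert h3 using 1
  · ext z; simp [_root_.GQ, Qx]
  · simp [_root_.GQ, Qx]
    field_simp

lemma WD.pX (N : ℕ) (hN : 1 ≤ N) (a b c : ℝ) (z : ℂ) (hz : 0 < z.im) :
    WD (fun z => (pX N a b c z : ℂ)) z (Complex.I / 2 / (Real.sqrt (2 * N) : ℝ) * _root_.GQ N a b c z) := by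
  have h1 := (WD.im z).comp (h := fun t : ℝ => t⁻¹) (hasDerivAt_inv hz.ne')
  have h2 := (((WD.const ((a : ℂ) * N) z).mul ((WD.id z).mul (WD.conj z))).add
    ((WD.const (b : ℂ) z).mul (WD.re z))).add (WD.const (c : ℂ) z)
  have h3 := (h2.mul h1).mul (WD.const (((Real.sqrt (2 * N))⁻¹ : ℝ) : ℂ) z)
  have hy : (z.im : ℂ) ≠ 0 := by exact_mod_cast hz.ne'
  have hs : ((Real.sqrt (2 * N) : ℝ) : ℂ) ≠ 0 := by
    have : 0 < Real.sqrt (2 * N) := by positivity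
    exact_mod_cast this.ne'
  convert h3 using 1
  · ext z
    simp [_root_.pX, Complex.mul_conj]
    ring
  · simp only [_root_.GQ, Qx, map_add, map_mul, map_pow, Complex.conj_ofReal, Complex.conj_natCast]
    push_cast
    field_simp
    apply Complex.ext <;> simp [pow_two] <;> ring

lemma pX_sq (N : ℕ) (hN : 1 ≤ N) (a b c : ℝ) (z : ℂ) (hz : 0 < z.im) :
    pX N a b c z ^ 2 = -2 * mVal N a b c + Complex.normSq (Qx N a b c z) / (2 * N * z.im ^ 2) := by
  have hN' : (0 : ℝ) < N := by exact_mod_cast hN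
  have hs : Real.sqrt (2 * N) ^ 2 = 2 * N := Real.sq_sqrt (by positivity)
  rw [pX, div_pow, mul_pow, hs, mVal]
  field_simp
  simp [Qx, Complex.normSq_apply, pow_two]
  ring

/-- For `m < 0`: `R_{2j} f_j = (sgn(p_z(X))/√(4N|m|))·(k+j)·f_{j+1}` on
`{z ∈ ℍ : Q_X(z) ≠ 0}`. -/
theorem raise_fj (N : ℕ) (hN : 1 ≤ N) (a b c : ℝ) (k j : ℕ) (hk : 1 ≤ k)
    (hm : mVal N a b c < 0) :
    ∀ z ∈ UH, Qx N a b c z ≠ 0 →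
      raise (2 * (j : ℝ)) (fj N a b c k j) z =
        ((Real.sign (pX N a b c z) / Real.sqrt (4 * N * |mVal N a b c|) : ℝ) : ℂ) *
          ((k : ℂ) + (j : ℂ)) * fj N a b c k (j + 1) z := by
  intro z hz hQ
  have hz : 0 < z.im := hz
  have hN' : (0 : ℝ) < N := by exact_mod_cast hN
  have hk' : (0 : ℝ) < k := by exact_mod_cast hk
  have hp2 := pX_sq N hN a b c z hz
  have hQ' : 0 < Complex.normSq (Qx N a b c z) / (2 * N * z.im ^ 2) := by
    have := Complex.normSq_pos.mpr hQ
    positivity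
  set s : ℝ := ((k : ℝ) + j) / 2 with hs
  set p : ℝ := pX N a b c z with hp
  set M : ℝ := |mVal N a b c| with hM
  have hMm : M = - mVal N a b c := abs_of_neg hm
  have hM0 : 0 < M := by linarith
  have hpp : 0 < p ^ 2 := by nlinarith
  have hp0 : p ≠ 0 := by rintro h; simp [h] at hpp
  set w : ℝ := wF N a b c z with hw
  have hwe : w = 2 * M / p ^ 2 := rfl
  have hw0 : 0 < w := by rw [hwe]; positivity
  have hw1 : w < 1 := by rw [hwe, div_lt_one hpp]; linarith
  have hs0 : 0 < s := by positivity
  obtain ⟨d, hd, hde⟩ := gaussF_hasDerivAt (α := s) (β := s + 1 / 2) (γ := (k : ℝ) + 1 / 2) hs0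
    (by positivity) (by positivity) hw0 hw1
  have hwd := (WD.pX N hN a b c z hz).comp (h := fun t : ℝ => 2 * M / t ^ 2)
    (((hasDerivAt_const p (2 * M)).div (hasDerivAt_pow 2 p) hpp.ne'))
  have hwd' : WD (fun z => (wF N a b c z : ℂ)) z _ := hwd
  have hh := (hwd'.comp (h := fun t : ℝ => t ^ s * gaussF s (s + 1 / 2) ((k : ℝ) + 1 / 2) t)
    ((Real.hasDerivAt_rpow_const (p := s) (Or.inl hw0.ne')).mul hd))
  have hf := ((WD.GQ N a b c z hz).pow j).mul hh
  have hfe : fj N a b c k j = fun z => GQ N a b c z ^ j *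
      ((wF N a b c z ^ s * gaussF s (s + 1 / 2) ((k : ℝ) + 1 / 2) (wF N a b c z) : ℝ) : ℂ) := by
    ext z
    have : ((k : ℝ) + j + 1) / 2 = s + 1 / 2 := by rw [hs]; ring
    rw [fj, this, GQ]
    push_cast
    ring
  have hfe' : fj N a b c k (j + 1) z = GQ N a b c z ^ (j + 1) *
      ((w ^ (s + 1 / 2) * gaussF (s + 1) (s + 1 / 2) ((k : ℝ) + 1 / 2) w : ℝ) : ℂ) := by
    have e1 : ((k : ℝ) + (j + 1 : ℕ)) / 2 = s + 1 / 2 := by rw [hs]; push_cast; ring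
    have e2 : ((k : ℝ) + (j + 1 : ℕ) + 1) / 2 = s + 1 := by rw [hs]; push_cast; ring
    rw [fj, e1, e2, GQ, gaussF_symm]
    push_cast
    ring
  rw [hfe'] 
  unfold raise
  rw [hfe, hf.dz]
  beta_reduce
  rw [← hw]
  set F := gaussF s (s + 1 / 2) ((k : ℝ) + 1 / 2) w
  set F1 := gaussF (s + 1) (s + 1 / 2) ((k : ℝ) + 1 / 2) w
  set G := GQ N a b c z
  -- the sign identity
  have hsg : Real.sign p / Real.sqrt (4 * N * M) * w ^ (s + 1 / 2)
      = w ^ s / (p * Real.sqrt (2 * N)) := by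
    have e0 : Real.sqrt (4 * N * M) = Real.sqrt (2 * N) * Real.sqrt (2 * M) := by
      rw [← Real.sqrt_mul (by positivity)]; congr 1; ring
    have e1 : w ^ (s + 1 / 2) = w ^ s * (Real.sqrt (2 * M) / |p|) := by
      rw [Real.rpow_add hw0, ← Real.sqrt_eq_rpow, hwe, Real.sqrt_div (by positivity),
        Real.sqrt_sq_eq_abs]
    have h2 : 0 < Real.sqrt (2 * M) := by positivity
    have h3 : 0 < Real.sqrt (2 * N) := by positivity
    rw [e0, e1]
    rcases lt_or_gt_of_ne hp0 with h | h
    · rw [Real.sign_of_neg h, abs_of_neg h]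
      field_simp
    · rw [Real.sign_of_pos h, abs_of_pos h]
      field_simp
  have hks : ((k : ℂ) + (j : ℂ)) = ((2 * s : ℝ) : ℂ) := by
    rw [hs]; push_cast; ring
  have hw2 : w ^ (s - 1) = w ^ s / w := Real.rpow_sub_one hw0.ne' s
  have hR : ((Real.sign p / Real.sqrt (4 * N * M) : ℝ) : ℂ) * ((k : ℂ) + (j : ℂ)) *
      (G ^ (j + 1) * ((w ^ (s + 1 / 2) * F1 : ℝ) : ℂ))
      = G ^ (j + 1) * ((2 * (w ^ s / (p * Real.sqrt (2 * N))) * (w * d + s * F) : ℝ) : ℂ) := by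
    rw [hks, hde, ← hsg]
    push_cast
    ring
  rw [hR, hw2]
  have hGj : (j : ℂ) * G ^ (j - 1) * (Complex.I / z.im * G) = j * G ^ j * (Complex.I / z.im) := by
    rcases j with _ | j
    · simp
    · simp only [Nat.add_sub_cancel]; rw [pow_succ]; ring
  rw [hGj]
  have hy : (z.im : ℂ) ≠ 0 := by exact_mod_cast hz.ne'
  have hpc : (p : ℂ) ≠ 0 := by exact_mod_cast hp0
  have hwc : (w : ℂ) ≠ 0 := by exact_mod_cast hw0.ne'
  have hsc : ((Real.sqrt (2 * N) : ℝ) : ℂ) ≠ 0 := by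
    have : 0 < Real.sqrt (2 * N) := by positivity
    exact_mod_cast this.ne'
  have hder : ((((0 : ℝ) * p ^ 2 - 2 * M * (((2 : ℕ) : ℝ) * p ^ (2 - 1))) / (p ^ 2) ^ 2 : ℝ)) 
      = -2 * w / p := by
    rw [hwe]; field_simp; ring
  rw [hder]
  generalize w ^ s = W
  push_cast
  generalize ((Real.sqrt (2 * N) : ℝ) : ℂ) = S at *
  have hI : Complex.I ^ 2 = -1 := Complex.I_sq
  rw [pow_succ]
  field_simp
  rw [hI]
  ring
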